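/- arXiv:2302.01598 — 3 statements merged into one kernel-verified Lean document; each statement's English description precedes it below -/
import Mathlib

section
/- Let k be a field and let Y be a retract rational k-variety. Then for any rational map f : Y ⇢ P^N which is generically injective, there is a rational section g : P^N ⇢ Y, i.e. a rational map g such that g ∘ f is defined and coincides with the identity as a rational map. -/
open AlgebraicGeometry CategoryTheory CategoryTheory.Limits TopologicalSpace

universe u

attribute [local instance] MvPolynomial.gradedAlgebra

noncomputable def ProjSpace (k : Type u) [Field k] (N : ℕ) : Scheme.{u} :=
  Proj (MvPolynomial.homogeneousSubmodule (Fin (N + 1)) k)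

noncomputable def ProjSpace.structMap (k : Type u) [Field k] (N : ℕ) :
    ProjSpace k N ⟶ Spec (CommRingCat.of k) :=
  Proj.toSpecZero _ ≫ Spec.map (CommRingCat.ofHom
    ((GradedRing.projZeroRingHom' (MvPolynomial.homogeneousSubmodule (Fin (N + 1)) k)).comp
      (MvPolynomial.C : k →+* MvPolynomial (Fin (N + 1)) k)))

def AlgebraicGeometry.Scheme.PartialMap.CompEqId {X Y : Scheme.{u}}
    (f : X.PartialMap Y) (g : Y.PartialMap X) : Prop :=
  ∃ (U : X.Opens) (_ : Dense (U : Set X)) (hle : U ≤ f.domain)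
    (lift : (U : Scheme.{u}) ⟶ (g.domain : Scheme.{u})),
      lift ≫ g.domain.ι = X.homOfLE hle ≫ f.hom ∧ lift ≫ g.hom = U.ι

def AlgebraicGeometry.Scheme.PartialMap.IsOverStruct {X Y B : Scheme.{u}}
    (sX : X ⟶ B) (sY : Y ⟶ B) (f : X.PartialMap Y) : Prop :=
  f.hom ≫ sY = f.domain.ι ≫ sX

/-- A scheme `X` with structure morphism `sX` over a field `K` is retract rational if the
identity on `X` factors rationally through some projective space `ℙ^N_K`:  there are
rational (partial) maps `f : X ⤏ ℙ^N` and `g : ℙ^N ⤏ X` over `K` such that `g ∘ f` is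
defined and agrees with the identity as a rational map. -/
def IsRetractRational (K : Type u) [Field K] (X : Scheme.{u})
    (sX : X ⟶ Spec (CommRingCat.of K)) : Prop :=
  ∃ (N : ℕ), 1 ≤ N ∧
    ∃ (f : X.PartialMap (ProjSpace K N)) (g : (ProjSpace K N).PartialMap X),
      f.IsOverStruct sX (ProjSpace.structMap K N) ∧
      g.IsOverStruct (ProjSpace.structMap K N) sX ∧
      f.CompEqId g

/-- Base change of a `k`-scheme along a field extension `k → K`. -/
noncomputable def baseChange {k : Type u} [Field k] (K : Type u) [Field K] [Algebra k K]
    {X : Scheme.{u}} (sX : X ⟶ Spec (CommRingCat.of k)) : Scheme.{u} :=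
  Limits.pullback sX (Spec.map (CommRingCat.ofHom (algebraMap k K)))

/-- The structure morphism of the base change. -/
noncomputable def baseChangeStruct {k : Type u} [Field k] (K : Type u) [Field K] [Algebra k K]
    {X : Scheme.{u}} (sX : X ⟶ Spec (CommRingCat.of k)) :
    baseChange K sX ⟶ Spec (CommRingCat.of K) :=
  Limits.pullback.snd sX (Spec.map (CommRingCat.ofHom (algebraMap k K)))

/-- A `k`-scheme is geometrically retract rational if its base change to an algebraic
closure of `k` is retract rational. -/
def IsGeometricallyRetractRational (k : Type u) [Field k] (X : Scheme.{u})
    (sX : X ⟶ Spec (CommRingCat.of k)) : Prop :=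
  IsRetractRational (AlgebraicClosure k) (baseChange (AlgebraicClosure k) sX)
    (baseChangeStruct (AlgebraicClosure k) sX)

/-- A partial (rational) map `f : X ⤏ Y` is generically injective if on suitable dense open
subsets `U ⊆ X` and `V ⊆ Y` it restricts to a closed embedding `U ↪ V`. -/
def AlgebraicGeometry.Scheme.PartialMap.GenericallyInjective {X Y : Scheme.{u}}
    (f : X.PartialMap Y) : Prop :=
  ∃ (U : X.Opens) (_ : Dense (U : Set X)) (hle : U ≤ f.domain)
    (V : Y.Opens) (_ : Dense (V : Set Y)) (h : (U : Scheme.{u}) ⟶ (V : Scheme.{u})),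
      h ≫ V.ι = X.homOfLE hle ≫ f.hom ∧ IsClosedImmersion h

/-- A `K`-scheme is unirational if it admits a dominant rational map from some
projective space over `K`. -/
def IsUnirational (K : Type u) [Field K] (X : Scheme.{u})
    (sX : X ⟶ Spec (CommRingCat.of K)) : Prop :=
  ∃ (N : ℕ) (g : (ProjSpace K N).PartialMap X),
    g.IsOverStruct (ProjSpace.structMap K N) sX ∧ IsDominant g.hom

/-- Two schemes over a base are birational (over the base) if there are rational maps
between them, over the base, which are mutually inverse as rational maps. -/
def AreBirationalOver {X Y B : Scheme.{u}} (sX : X ⟶ B) (sY : Y ⟶ B) : Prop :=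
  ∃ (f : X.PartialMap Y) (g : Y.PartialMap X),
    f.IsOverStruct sX sY ∧ g.IsOverStruct sY sX ∧ f.CompEqId g ∧ g.CompEqId f

/-!
After shrinking, a generically injective `f : Y ⇢ Z` is a closed immersion of an open subscheme of
`Y` into an affine open subscheme of `Z`, and the map from `Y` to projective space which exhibits
`Y` as retract rational lands in a standard affine chart. The coordinate ring of such a chart is a
polynomial ring, hence lifts along surjections, so this map extends along the closed immersion to
the affine open subscheme of `Z`. Composing the extension with the retraction gives the section.
-/

universe v

section StandardChart

variable {σ R : Type*} [CommRing R]

theorem eval₂_const_mul_of_isHomogeneous {S T ι : Type*} [CommSemiring S] [CommSemiring T]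
    {p : MvPolynomial ι S} {n : ℕ} (hp : p.IsHomogeneous n) (f : S →+* T) (c : T) (g : ι → T) :
    p.eval₂ f (fun j => c * g j) = c ^ n * p.eval₂ f g := by
  simp only [MvPolynomial.eval₂_eq, Finset.mul_sum]
  refine Finset.sum_congr rfl fun d hd => ?_
  have sum_eq : ∑ i ∈ d.support, d i = n := by
    rw [← hp (MvPolynomial.mem_support_iff.mp hd)]
    simp [Finsupp.weight_apply, Finsupp.sum]
  simp only [mul_pow, Finset.prod_mul_distrib, Finset.prod_pow_eq_pow_sum, sum_eq]
  ring

theorem X_mem_homogeneousSubmodule {S : Type*} [CommSemiring S] (i : σ) :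
    (MvPolynomial.X i : MvPolynomial σ S) ∈ MvPolynomial.homogeneousSubmodule σ S 1 :=
  MvPolynomial.isHomogeneous_X S i

variable (R) in
/-- The coordinate ring of the `i`-th standard chart of the projective space over `R` with
homogeneous coordinates indexed by `σ`, as the degree zero part of the localization of
`MvPolynomial σ R` at `X i`. It is a polynomial ring in the `X j / X i` for `j ≠ i`. -/
abbrev StandardChart (i : σ) : Type _ :=
  HomogeneousLocalization.Away (MvPolynomial.homogeneousSubmodule σ R) (MvPolynomial.X i)

namespace StandardChart

/-- The inclusion of the constants into the coordinate ring of a standard chart. -/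
noncomputable def C (i : σ) : R →+* StandardChart R i :=
  (HomogeneousLocalization.fromZeroRingHom _ _).comp
    ((GradedRing.projZeroRingHom' (MvPolynomial.homogeneousSubmodule σ R)).comp MvPolynomial.C)

/-- The degree zero fraction `p / X i ^ n`, for `p` homogeneous of degree `n`. -/
noncomputable def mk (i : σ) {n : ℕ} (p : MvPolynomial σ R) (hp : p.IsHomogeneous n) :
    StandardChart R i :=
  HomogeneousLocalization.Away.mk _ (X_mem_homogeneousSubmodule i) n p
    ((MvPolynomial.mem_homogeneousSubmodule _ _).mpr (by simpa using hp))

variable (R) in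
/-- The `j`-th affine coordinate `X j / X i` on the `i`-th standard chart. -/
noncomputable def coord (i j : σ) : StandardChart R i :=
  mk i (.X j) (MvPolynomial.isHomogeneous_X R j)

theorem exists_eq_mk {i : σ} (z : StandardChart R i) :
    ∃ (n : ℕ) (p : MvPolynomial σ R) (hp : p.IsHomogeneous n), z = mk i p hp := by
  obtain ⟨n, p, hp, rfl⟩ :=
    HomogeneousLocalization.Away.mk_surjective _ (X_mem_homogeneousSubmodule i) z
  exact ⟨n, p, by simpa using hp, rfl⟩

theorem val_C (i : σ) (r : R) : (C i r).val = algebraMap (MvPolynomial σ R) _ (.C r) := by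
  refine Eq.trans (congrArg (Localization.mk · 1) ?_) (Localization.mk_one_eq_algebraMap _)
  exact DirectSum.decompose_of_mem_same (MvPolynomial.homogeneousSubmodule σ R)
    (MvPolynomial.isHomogeneous_C _ r)

theorem pow_mul_val_mk (i : σ) {n : ℕ} {p : MvPolynomial σ R} (hp : p.IsHomogeneous n) :
    algebraMap (MvPolynomial σ R) _ (.X i) ^ n * (mk i p hp).val =
      algebraMap (MvPolynomial σ R) _ p := by
  rw [mk, HomogeneousLocalization.Away.val_mk, Localization.mk_eq_mk', ← map_pow]
  exact IsLocalization.mk'_spec' (Localization.Away (.X i : MvPolynomial σ R)) p _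

theorem eq_mk_iff {i : σ} {z : StandardChart R i} {n : ℕ} {p : MvPolynomial σ R}
    (hp : p.IsHomogeneous n) :
    z = mk i p hp ↔
      algebraMap (MvPolynomial σ R) _ (.X i) ^ n * z.val = algebraMap (MvPolynomial σ R) _ p := by
  have isUnit_X : IsUnit (algebraMap (MvPolynomial σ R)
      (Localization.Away (.X i : MvPolynomial σ R)) (.X i)) :=
    IsLocalization.Away.algebraMap_isUnit _
  rw [← pow_mul_val_mk i hp, (isUnit_X.pow n).mul_right_inj,
    (HomogeneousLocalization.val_injective _).eq_iff]

theorem C_eq_mk (i : σ) (r : R) : C i r = mk i (.C r) (MvPolynomial.isHomogeneous_C σ r) := by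
  rw [eq_mk_iff, val_C, pow_zero, one_mul]

theorem coord_self (i : σ) : coord R i i = 1 := by
  rw [coord, eq_comm, eq_mk_iff, pow_one, HomogeneousLocalization.val_one, mul_one]

theorem eval₂_coord (i : σ) {n : ℕ} {p : MvPolynomial σ R} (hp : p.IsHomogeneous n) :
    p.eval₂ (C i) (coord R i) = mk i p hp := by
  let a := algebraMap (MvPolynomial σ R) (Localization.Away (.X i : MvPolynomial σ R))
  let v := algebraMap (StandardChart R i) (Localization.Away (.X i : MvPolynomial σ R))
  have map_C : v.comp (C i) = a.comp MvPolynomial.C := RingHom.ext (val_C i)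
  have map_X (j : σ) : a (.X i) * (v ∘ coord R i) j = a (.X j) := by
    rw [← pow_one (a (.X i))]
    exact pow_mul_val_mk i (MvPolynomial.isHomogeneous_X R j)
  rw [eq_mk_iff]
  calc a (.X i) ^ n * v (p.eval₂ (C i) (coord R i))
      = a (.X i) ^ n * p.eval₂ (a.comp MvPolynomial.C) (v ∘ coord R i) := by
        rw [MvPolynomial.hom_eval₂, map_C, Function.comp_def]
    _ = p.eval₂ (a.comp MvPolynomial.C) (fun j => a (.X i) * (v ∘ coord R i) j) :=
        (eval₂_const_mul_of_isHomogeneous hp _ _ _).symm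
    _ = a (p.eval₂ MvPolynomial.C MvPolynomial.X) := by
        simp_rw [map_X, MvPolynomial.hom_eval₂]
    _ = a p := by rw [MvPolynomial.eval₂_eta]

@[ext]
theorem ringHom_ext {i : σ} {S : Type*} [CommSemiring S] {φ ψ : StandardChart R i →+* S}
    (hC : φ.comp (C i) = ψ.comp (C i)) (hcoord : ∀ j, φ (coord R i j) = ψ (coord R i j)) :
    φ = ψ := by
  ext z
  obtain ⟨n, p, hp, rfl⟩ := exists_eq_mk z
  rw [← eval₂_coord, MvPolynomial.hom_eval₂, MvPolynomial.hom_eval₂, hC]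
  exact congrArg (p.eval₂ _) (funext hcoord)

section Lift

variable {i : σ} {S : Type*} [CommRing S]

/-- The ring homomorphism out of the coordinate ring of the `i`-th standard chart with prescribed
values `τ` on constants and `b j` on the affine coordinates `X j / X i`. -/
noncomputable def lift (τ : R →+* S) (b : σ → S) (hb : b i = 1) : StandardChart R i →+* S :=
  (IsLocalization.Away.lift (S := Localization.Away (.X i : MvPolynomial σ R)) (.X i)
    (g := MvPolynomial.eval₂Hom τ b) (by simp [hb])).comp (algebraMap _ _)

theorem lift_mk (τ : R →+* S) (b : σ → S) (hb : b i = 1) {n : ℕ} {p : MvPolynomial σ R}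
    (hp : p.IsHomogeneous n) : lift τ b hb (mk i p hp) = p.eval₂ τ b := by
  have h := congrArg (IsLocalization.Away.lift (.X i) (g := MvPolynomial.eval₂Hom τ b)
    (by simp [hb])) (pow_mul_val_mk i hp)
  simpa [lift, hb] using h

theorem lift_coord (τ : R →+* S) (b : σ → S) (hb : b i = 1) (j : σ) :
    lift τ b hb (coord R i j) = b j := by
  simp [coord, lift_mk]

theorem lift_comp_C (τ : R →+* S) (b : σ → S) (hb : b i = 1) : (lift τ b hb).comp (C i) = τ := by
  ext r
  rw [RingHom.comp_apply, C_eq_mk, lift_mk, MvPolynomial.eval₂_C]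

theorem exists_lift_of_surjective {T : Type*} [CommRing T] {π : S →+* T}
    (hπ : Function.Surjective π) {τ : R →+* S} {φ : StandardChart R i →+* T}
    (h : φ.comp (C i) = π.comp τ) :
    ∃ ψ : StandardChart R i →+* S, ψ.comp (C i) = τ ∧ π.comp ψ = φ := by
  classical
  choose b hb using fun j => hπ (φ (coord R i j))
  refine ⟨lift τ (Function.update b i 1) (by simp), lift_comp_C _ _ _, ringHom_ext ?_ fun j => ?_⟩
  · rw [RingHom.comp_assoc, lift_comp_C, h]
  · rw [RingHom.comp_apply, lift_coord]
    obtain rfl | hj := eq_or_ne j i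
    · simp [coord_self]
    · simp [hj, hb]

end Lift

end StandardChart

end StandardChart

section LiftingProperty

theorem hasLiftingProperty_Spec_map_iff {T Z : Scheme.{u}} {A B : CommRingCat.{u}} (i : T ⟶ Z)
    (c : A ⟶ B) : HasLiftingProperty i (Spec.map c) ↔ HasLiftingProperty c i.appTop :=
  (ΓSpec.adjunction.hasLiftingProperty_iff i c.op).symm.trans (HasLiftingProperty.iff_unop _ _)

theorem StandardChart.hasLiftingProperty_ofHom_C {σ : Type v} (R : Type max u v) [CommRing R]
    (i : σ) {S T : CommRingCat.{max u v}} (π : S ⟶ T) (hπ : Function.Surjective π) :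
    HasLiftingProperty (CommRingCat.ofHom (C i : R →+* StandardChart R i)) π where
  sq_hasLift {τ φ} sq := by
    obtain ⟨ψ, comp_C, comp_ψ⟩ := exists_lift_of_surjective hπ (τ := τ.hom) (φ := φ.hom)
      (congrArg CommRingCat.Hom.hom sq.w).symm
    exact ⟨⟨⟨CommRingCat.ofHom ψ, CommRingCat.hom_ext comp_C, CommRingCat.hom_ext comp_ψ⟩⟩⟩

theorem StandardChart.hasLiftingProperty_Spec_map_C {σ : Type v} (R : Type max u v) [CommRing R]
    (l : σ) {T Z : Scheme.{max u v}} [IsAffine Z] (i : T ⟶ Z) [IsClosedImmersion i] :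
    HasLiftingProperty i
      (Spec.map (CommRingCat.ofHom (C l : R →+* StandardChart R l))) :=
  (hasLiftingProperty_Spec_map_iff i _).mpr <|
    hasLiftingProperty_ofHom_C R l i.appTop (IsClosedImmersion.isAffine_surjective_of_isAffine i).2

end LiftingProperty

section ProjectiveSpace

theorem adjoin_range_X_eq_top (σ R : Type*) [CommRing R] :
    Algebra.adjoin (MvPolynomial.homogeneousSubmodule σ R 0)
      (Set.range (MvPolynomial.X : σ → MvPolynomial σ R)) = ⊤ := by
  refine eq_top_iff.mpr fun p _ => ?_
  induction p using MvPolynomial.induction_on with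
  | C r =>
    exact (Algebra.adjoin (MvPolynomial.homogeneousSubmodule σ R 0) _).algebraMap_mem
      ⟨_, MvPolynomial.isHomogeneous_C _ r⟩
  | add p q hp hq => exact add_mem (hp trivial) (hq trivial)
  | mul_X p i hp => exact mul_mem (hp trivial) (Algebra.subset_adjoin ⟨i, rfl⟩)

theorem irreducibleSpace_proj {A τ : Type*} [CommRing A] [IsDomain A] [SetLike τ A]
    [AddSubgroupClass τ A] (𝒜 : ℕ → τ) [GradedRing 𝒜] (h : HomogeneousIdeal.irrelevant 𝒜 ≠ ⊥) :
    IrreducibleSpace (Proj 𝒜) := by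
  let η : ProjectiveSpectrum 𝒜 :=
    { asHomogeneousIdeal := ⊥
      isPrime := by simpa only [HomogeneousIdeal.toIdeal_bot] using Ideal.isPrime_bot
      not_irrelevant_le := fun hle => h (le_bot_iff.mp hle) }
  have closure_η : closure {η} = Set.univ := Set.eq_univ_of_forall fun x =>
    (ProjectiveSpectrum.le_iff_mem_closure 𝒜 η x).mp <|
      (ProjectiveSpectrum.as_ideal_le_as_ideal 𝒜 η x).mp bot_le
  have isIrreducible_univ : IsIrreducible (Set.univ : Set (ProjectiveSpectrum 𝒜)) :=
    closure_η ▸ isIrreducible_singleton.closure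
  exact (irreducibleSpace_def _).mpr isIrreducible_univ

theorem irrelevant_homogeneousSubmodule_ne_bot (σ R : Type*) [CommRing R] [Nontrivial R]
    [Nonempty σ] : HomogeneousIdeal.irrelevant (MvPolynomial.homogeneousSubmodule σ R) ≠ ⊥ := by
  intro h
  inhabit σ
  have X_mem : (MvPolynomial.X default : MvPolynomial σ R) ∈
      HomogeneousIdeal.irrelevant (MvPolynomial.homogeneousSubmodule σ R) :=
    HomogeneousIdeal.mem_irrelevant_of_mem _ one_pos (X_mem_homogeneousSubmodule default)
  exact MvPolynomial.X_ne_zero _ (h ▸ X_mem)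

namespace ProjSpace

variable (k : Type u) [Field k] (N : ℕ)

instance irreducibleSpace : IrreducibleSpace (ProjSpace k N) :=
  irreducibleSpace_proj _ (irrelevant_homogeneousSubmodule_ne_bot _ k)

/-- The inclusion of the `i`-th standard chart, where `X i` is invertible. -/
noncomputable def chartι (i : Fin (N + 1)) :
    Spec (CommRingCat.of (StandardChart k i)) ⟶ ProjSpace k N :=
  Proj.awayι _ (MvPolynomial.X i) (X_mem_homogeneousSubmodule i) one_pos

instance (i : Fin (N + 1)) : IsOpenImmersion (chartι k N i) :=
  inferInstanceAs (IsOpenImmersion (Proj.awayι _ _ _ _))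

theorem chartι_structMap (i : Fin (N + 1)) :
    chartι k N i ≫ structMap k N = Spec.map (CommRingCat.ofHom (StandardChart.C i)) := by
  refine (Proj.awayι_toSpecZero_assoc _ _ _ _ _).trans ?_
  rw [← Spec.map_comp]
  rfl

theorem exists_mem_range_chartι (x : ProjSpace k N) : ∃ i, x ∈ Set.range (chartι k N i) := by
  have iSup_basicOpen : ⨆ i, Proj.basicOpen _ (MvPolynomial.X i) = ⊤ :=
    Proj.iSup_basicOpen_eq_top' (MvPolynomial.homogeneousSubmodule (Fin (N + 1)) k) _
      (fun i => ⟨1, X_mem_homogeneousSubmodule i⟩) (adjoin_range_X_eq_top _ k)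
  obtain ⟨i, hi⟩ := Opens.mem_iSup.mp (iSup_basicOpen.ge (Set.mem_univ x))
  rw [← Proj.opensRange_awayι _ _ (X_mem_homogeneousSubmodule i) one_pos] at hi
  exact ⟨i, hi⟩

end ProjSpace

end ProjectiveSpace

section PartialMap

theorem compEqId_of_isOpenImmersion {X Y T : Scheme.{u}} [IrreducibleSpace X] [Nonempty T]
    {f : X.PartialMap Y} {g : Y.PartialMap X} (r : T ⟶ X) [IsOpenImmersion r] {a : T ⟶ f.domain}
    {m : T ⟶ g.domain} (ha : a ≫ f.domain.ι = r) (hm : m ≫ g.domain.ι = a ≫ f.hom)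
    (hr : m ≫ g.hom = r) : f.CompEqId g := by
  have hle : r.opensRange ≤ f.domain := by
    rintro _ ⟨x, rfl⟩
    rw [← ha]
    exact (a x).2
  have isoOpensRange_comp : r.isoOpensRange.hom ≫ X.homOfLE hle = a := by
    rw [← cancel_mono f.domain.ι, ha, Category.assoc, Scheme.homOfLE_ι,
      Scheme.Hom.isoOpensRange_hom_ι]
  refine ⟨r.opensRange, r.opensRange.isOpen.dense (Set.range_nonempty r), hle,
    r.isoOpensRange.inv ≫ m, ?_, ?_⟩
  · rw [← cancel_epi r.isoOpensRange.hom, Category.assoc, Iso.hom_inv_id_assoc, hm,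
      reassoc_of% isoOpensRange_comp]
  · rw [Category.assoc, Iso.inv_comp_eq, hr, Scheme.Hom.isoOpensRange_hom_ι]

/-- The partial map `q ∘ j⁻¹`, defined on the image of an open immersion `j` with nonempty source
into an irreducible scheme. -/
noncomputable def partialMapOfOpenImmersion {E Z Y : Scheme.{u}} [Nonempty E] [IrreducibleSpace Z]
    (j : E ⟶ Z) [IsOpenImmersion j] (q : E ⟶ Y) : Z.PartialMap Y :=
  ⟨j.opensRange, j.opensRange.isOpen.dense (Set.range_nonempty j), j.isoOpensRange.inv ≫ q⟩

section

variable {E Z Y : Scheme.{u}} [Nonempty E] [IrreducibleSpace Z]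
  (j : E ⟶ Z) [IsOpenImmersion j] (q : E ⟶ Y)

theorem isOverStruct_partialMapOfOpenImmersion {B : Scheme.{u}} {sZ : Z ⟶ B} {sY : Y ⟶ B}
    (h : q ≫ sY = j ≫ sZ) : (partialMapOfOpenImmersion j q).IsOverStruct sZ sY := by
  change (j.isoOpensRange.inv ≫ q) ≫ sY = j.opensRange.ι ≫ sZ
  rw [Category.assoc, Iso.inv_comp_eq, h, Scheme.Hom.isoOpensRange_hom_ι_assoc]

theorem compEqId_partialMapOfOpenImmersion {T : Scheme.{u}} [IrreducibleSpace Y] [Nonempty T]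
    {f : Y.PartialMap Z} (r : T ⟶ Y) [IsOpenImmersion r] {a : T ⟶ f.domain} {m : T ⟶ E}
    (ha : a ≫ f.domain.ι = r) (hm : m ≫ j = a ≫ f.hom) (hr : m ≫ q = r) :
    f.CompEqId (partialMapOfOpenImmersion j q) := by
  refine compEqId_of_isOpenImmersion r (m := m ≫ j.isoOpensRange.hom) ha ?_ ?_
  · change (m ≫ j.isoOpensRange.hom) ≫ j.opensRange.ι = a ≫ f.hom
    rw [Category.assoc, Scheme.Hom.isoOpensRange_hom_ι, hm]
  · change (m ≫ j.isoOpensRange.hom) ≫ j.isoOpensRange.inv ≫ q = r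
    rw [Category.assoc, Iso.hom_inv_id_assoc, hr]

end

theorem exists_isAffineOpen_preimage_le {U V : Scheme.{u}} (h : U ⟶ V) [IsPreimmersion h] {x : U}
    {W : U.Opens} (hx : x ∈ W) : ∃ V' : V.Opens, IsAffineOpen V' ∧ h x ∈ V' ∧ h ⁻¹ᵁ V' ≤ W := by
  obtain ⟨V₁, hV₁, preimage_V₁⟩ := h.isEmbedding.isInducing.isOpen_iff.mp W.isOpen
  have hx₁ : x ∈ h ⁻¹' V₁ := preimage_V₁ ▸ hx
  obtain ⟨_, ⟨V', hV', rfl⟩, hxV', hle⟩ :=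
    V.isBasis_affineOpens.exists_subset_of_mem_open hx₁ hV₁
  exact ⟨V', hV', hxV', fun z hz => (preimage_V₁ ▸ hle hz : z ∈ (W : Set U))⟩

theorem exists_affine_isClosedImmersion_of_genericallyInjective {Y Z T : Scheme.{u}} [Nonempty T]
    {f : Y.PartialMap Z} (hf : f.GenericallyInjective) (r : T ⟶ Y) [IsOpenImmersion r] :
    ∃ (T' Z' : Scheme.{u}) (_ : Nonempty T') (_ : IsAffine Z') (u : T' ⟶ T) (a : T' ⟶ f.domain)
      (c : T' ⟶ Z') (j : Z' ⟶ Z), IsOpenImmersion u ∧ IsOpenImmersion j ∧ IsClosedImmersion c ∧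
        a ≫ f.domain.ι = u ≫ r ∧ c ≫ j = a ≫ f.hom := by
  obtain ⟨U, hU, hle, V, -, h, h_comp, isClosedImmersion_h⟩ := hf
  obtain ⟨y, hyr, hyU⟩ := hU.inter_open_nonempty _ r.opensRange.isOpen (Set.range_nonempty r)
  obtain ⟨V', isAffineOpen_V', hyV', preimage_le⟩ :=
    exists_isAffineOpen_preimage_le h (x := ⟨y, hyU⟩) (W := U.ι ⁻¹ᵁ r.opensRange) hyr
  have range_le : Set.range ((h ⁻¹ᵁ V').ι ≫ U.ι) ⊆ Set.range r := by
    rintro _ ⟨x, rfl⟩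
    exact preimage_le x.2
  let u := IsOpenImmersion.lift r ((h ⁻¹ᵁ V').ι ≫ U.ι) range_le
  have u_comp : u ≫ r = (h ⁻¹ᵁ V').ι ≫ U.ι := IsOpenImmersion.lift_fac _ _ _
  have : IsOpenImmersion (u ≫ r) := u_comp ▸ inferInstance
  refine ⟨h ⁻¹ᵁ V', V', ⟨⟨y, hyU⟩, hyV'⟩, isAffineOpen_V', u, (h ⁻¹ᵁ V').ι ≫ Y.homOfLE hle,
    h ∣_ V', V'.ι ≫ V.ι, .of_comp u r, inferInstance, inferInstance, ?_, ?_⟩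
  · rw [u_comp, Category.assoc, Scheme.homOfLE_ι]
  · rw [morphismRestrict_ι_assoc, h_comp, Category.assoc]

end PartialMap

section LocalRetract

/-- `Y` is a local retract of `A` over `B`: the inclusion of some nonempty open subscheme
of `Y` factors over `B` through an open subscheme of `A`. Since `sY` restricted to that open
subscheme is determined by `ρ`, the map `t` is automatically a morphism over `B`. -/
def IsLocalRetract {A Y B : Scheme.{u}} (sA : A ⟶ B) (sY : Y ⟶ B) : Prop :=
  ∃ (T D : Scheme.{u}) (_ : Nonempty T) (r : T ⟶ Y) (d : D ⟶ A) (t : T ⟶ D) (ρ : D ⟶ Y),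
    IsOpenImmersion r ∧ IsOpenImmersion d ∧ t ≫ ρ = r ∧ ρ ≫ sY = d ≫ sA

theorem isLocalRetract_chart_of_isRetractRational {k : Type u} [Field k] {Y : Scheme.{u}}
    [Nonempty Y] {sY : Y ⟶ Spec (CommRingCat.of k)} (hY : IsRetractRational k Y sY) :
    ∃ (n : ℕ) (i : Fin (n + 1)),
      IsLocalRetract (Spec.map (CommRingCat.ofHom (StandardChart.C i : k →+* _))) sY := by
  obtain ⟨n, -, f, g, -, g_over, U, dense_U, -, l, -, l_comp⟩ := hY
  obtain ⟨y, hy⟩ := dense_U.nonempty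
  obtain ⟨i, z, hz⟩ := ProjSpace.exists_mem_range_chartι k n (g.domain.ι (l ⟨y, hy⟩))
  let d : pullback g.domain.ι (ProjSpace.chartι k n i) ⟶ g.domain := pullback.fst _ _
  obtain ⟨w, hw, -⟩ := Scheme.Pullback.exists_preimage_pullback _ z hz.symm
  obtain ⟨t, -⟩ := Scheme.Pullback.exists_preimage_pullback (f := l) (g := d) _ w hw.symm
  refine ⟨n, i, pullback l d, _, ⟨t⟩, pullback.fst l d ≫ U.ι, pullback.snd _ _, pullback.snd l d,
    d ≫ g.hom, inferInstance, inferInstance, ?_, ?_⟩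
  · rw [← l_comp, ← pullback.condition_assoc]
  · rw [Category.assoc, g_over, pullback.condition_assoc, ProjSpace.chartι_structMap]

theorem exists_section_of_isLocalRetract {A Y Z B : Scheme.{u}} [IrreducibleSpace Y]
    [IrreducibleSpace Z] {sA : A ⟶ B} {sY : Y ⟶ B} {sZ : Z ⟶ B}
    (hA : ∀ ⦃T Z' : Scheme.{u}⦄ [IsAffine Z'] (c : T ⟶ Z') [IsClosedImmersion c],
      HasLiftingProperty c sA)
    (hY : IsLocalRetract sA sY) {f : Y.PartialMap Z} (hf : f.IsOverStruct sY sZ)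
    (hinj : f.GenericallyInjective) :
    ∃ g : Z.PartialMap Y, g.IsOverStruct sZ sY ∧ f.CompEqId g := by
  obtain ⟨T, D, _, r, d, t, ρ, _, _, t_comp, ρ_over⟩ := hY
  obtain ⟨T', Z', _, _, u, a, c, j, _, _, _, a_comp, c_comp⟩ :=
    exists_affine_isClosedImmersion_of_genericallyInjective hinj r
  have sq : CommSq ((u ≫ t) ≫ d) c sA (j ≫ sZ) := ⟨by
    rw [reassoc_of% c_comp, hf, reassoc_of% a_comp, ← t_comp]
    simp only [Category.assoc, ρ_over]⟩
  obtain ⟨⟨e, c_comp_e, e_over⟩⟩ := ((hA c).sq_hasLift sq).exists_lift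
  let m : T' ⟶ pullback e d := pullback.lift c (u ≫ t) c_comp_e
  have : Nonempty (pullback e d : Scheme.{u}) := .map m inferInstance
  refine ⟨partialMapOfOpenImmersion (pullback.fst e d ≫ j) (pullback.snd e d ≫ ρ),
    isOverStruct_partialMapOfOpenImmersion _ _ ?_,
    compEqId_partialMapOfOpenImmersion _ _ (u ≫ r) (m := m) a_comp ?_ ?_⟩
  · rw [Category.assoc, ρ_over, ← pullback.condition_assoc, e_over, Category.assoc]
  · rw [pullback.lift_fst_assoc, c_comp]
  · rw [pullback.lift_snd_assoc, Category.assoc, t_comp]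

end LocalRetract

theorem retract_rational_section_of_genericallyInjective_general
    {k : Type u} [Field k] {Y Z : Scheme.{u}} [IrreducibleSpace Y] [IrreducibleSpace Z]
    {sY : Y ⟶ Spec (CommRingCat.of k)} {sZ : Z ⟶ Spec (CommRingCat.of k)}
    (hY : IsRetractRational k Y sY) {f : Y.PartialMap Z} (hf : f.IsOverStruct sY sZ)
    (hinj : f.GenericallyInjective) :
    ∃ g : Z.PartialMap Y, g.IsOverStruct sZ sY ∧ f.CompEqId g := by
  obtain ⟨n, i, isLocalRetract⟩ := isLocalRetract_chart_of_isRetractRational hY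
  exact exists_section_of_isLocalRetract
    (fun _ _ _ c _ => StandardChart.hasLiftingProperty_Spec_map_C k i c) isLocalRetract hf hinj

/-- **Lemma 1 (Schreieder, Geometric retract rationality of norm varieties).**
Let `k` be a field and let `Y` be a retract rational `k`-variety.  Then any generically
injective rational map `f : Y ⇢ ℙ^N` admits a rational section, i.e. there is a rational
map `g : ℙ^N ⇢ Y` over `k` such that `g ∘ f` is defined and coincides with the identity
as a rational map. -/
theorem retract_rational_section_of_genericallyInjective
    (k : Type u) [Field k] (Y : Scheme.{u}) (sY : Y ⟶ Spec (CommRingCat.of k))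
    [IsIntegral Y] [LocallyOfFiniteType sY] [QuasiCompact sY] [IsSeparated sY]
    (hY : IsRetractRational k Y sY) (N : ℕ)
    (f : Y.PartialMap (ProjSpace k N))
    (hf : f.IsOverStruct sY (ProjSpace.structMap k N))
    (hinj : f.GenericallyInjective) :
    ∃ g : (ProjSpace k N).PartialMap Y,
      g.IsOverStruct (ProjSpace.structMap k N) sY ∧ f.CompEqId g := by
  exact retract_rational_section_of_genericallyInjective_general hY hf hinj
end

section
/- Let k be a field, let Y be a retract rational k-variety and let Z be any k-variety. Then any generically injective rational map f : Y ⇢ Z admits a rational section, i.e. a rational map g : Z ⇢ Y such that g ∘ f is defined and coincides with the identity as a rational map. -/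
open AlgebraicGeometry CategoryTheory CategoryTheory.Limits TopologicalSpace

universe u

attribute [local instance] MvPolynomial.gradedAlgebra

/-!
A standard chart of projective space over `k` is an affine space, so by lifting coordinate
functions a `k`-morphism to it extends along every closed immersion into an affine `k`-scheme. Let
the identity of `Y` factor rationally as `Y ⇢ ℙ^N ⇢ Y`. Near a suitable point, `f` is a closed
immersion of an open subset of `Y` into an affine open subset `S` of `Z`, and `Y ⇢ ℙ^N` takes
values in a single chart; hence `Y ⇢ ℙ^N` extends along `f` to `S ⟶ ℙ^N`. Composing this extension
with the retraction `ℙ^N ⇢ Y` gives the section.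
-/

/-- The closed immersions into affine schemes, against which affine spaces have the right lifting
property. -/
def affineClosedImmersions : MorphismProperty Scheme.{u} :=
  fun _ S i ↦ IsAffine S ∧ IsClosedImmersion i

lemma rlp_affineClosedImmersions_SpecMap {R A : CommRingCat.{u}} {φ : R ⟶ A}
    (hφ : (MorphismProperty.surjective CommRingCat.{u}).llp φ) :
    affineClosedImmersions.rlp (Spec.map φ) := by
  rintro T S i ⟨_, _⟩
  have hi : Function.Surjective i.appTop :=
    (IsClosedImmersion.isAffine_surjective_of_isAffine i).2
  have := hφ i.appTop hi
  exact (ΓSpec.adjunction.hasLiftingProperty_iff i φ.op).mp this.op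

lemma llp_surjective_mvPolynomial_C (σ : Type) (R : Type u) [CommRing R] :
    (MorphismProperty.surjective CommRingCat.{u}).llp
      (CommRingCat.ofHom (MvPolynomial.C : R →+* MvPolynomial σ R)) := by
  intro B B' π hπ
  refine ⟨fun {s φ} sq ↦ ?_⟩
  choose b hb using fun j ↦ hπ (φ (MvPolynomial.X j))
  refine ⟨⟨⟨CommRingCat.ofHom (MvPolynomial.eval₂Hom s.hom b), ?_, ?_⟩⟩⟩
  · ext r
    simp
  · ext : 1
    apply MvPolynomial.ringHom_ext
    · intro r
      simpa using congr($(sq.w) r)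
    · intro j
      simpa using hb j

lemma eval₂_mul_of_isHomogeneous {σ R S : Type*} [CommSemiring R] [CommSemiring S]
    {p : MvPolynomial σ R} {n : ℕ} (hp : p.IsHomogeneous n) (f : R →+* S) (c : S) (x : σ → S) :
    p.eval₂ f (fun j ↦ c * x j) = c ^ n * p.eval₂ f x := by
  rw [MvPolynomial.eval₂_eq, MvPolynomial.eval₂_eq, Finset.mul_sum]
  refine Finset.sum_congr rfl fun d hd ↦ ?_
  have hdeg : ∑ j ∈ d.support, d j = n := by
    simpa [Finsupp.weight_apply, Finsupp.sum] using hp (MvPolynomial.mem_support_iff.mp hd)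
  simp only [mul_pow, Finset.prod_mul_distrib, Finset.prod_pow_eq_pow_sum, hdeg]
  exact mul_left_comm _ _ _

lemma adjoin_homogeneousSubmodule_zero_range_X (σ R : Type*) [CommSemiring R] :
    Algebra.adjoin (MvPolynomial.homogeneousSubmodule σ R 0)
      (Set.range (MvPolynomial.X : σ → MvPolynomial σ R)) = ⊤ := by
  refine top_le_iff.mp fun p _ ↦ ?_
  induction p using MvPolynomial.induction_on with
  | C r =>
    exact Subalgebra.algebraMap_mem _ (⟨MvPolynomial.C r, MvPolynomial.isHomogeneous_C _ r⟩ :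
      MvPolynomial.homogeneousSubmodule σ R 0)
  | add p q hp hq => exact add_mem (hp trivial) (hq trivial)
  | mul_X p i hp => exact mul_mem (hp trivial) (Algebra.subset_adjoin (Set.mem_range_self i))

namespace ProjSpace

open HomogeneousLocalization MvPolynomial

section ChartRing

variable {σ : Type*} (R : Type*) [CommRing R] (i : σ)

lemma X_mem_homogeneousSubmodule (j : σ) : X j ∈ homogeneousSubmodule σ R 1 :=
  isHomogeneous_X R j

/-- The coordinate ring of the chart `X i ≠ 0` of the projective space over `R` with homogeneous
coordinates indexed by `σ`. -/
abbrev ChartRing : Type _ :=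
  Away (homogeneousSubmodule σ R) (X i)

/-- The structure map of the chart ring as an `R`-algebra, written as the composite through the
degree zero part that `ProjSpace.structMap` prescribes. -/
noncomputable def chartScalars : R →+* ChartRing R i :=
  (fromZeroRingHom (homogeneousSubmodule σ R) (Submonoid.powers (X i))).comp
    ((GradedRing.projZeroRingHom' (homogeneousSubmodule σ R)).comp C)

/-- The coordinate function `X j / X i` on the chart `X i ≠ 0`. -/
noncomputable def chartCoord (j : σ) : ChartRing R i :=
  Away.mk _ (X_mem_homogeneousSubmodule R i) 1 (X j) (by
    simpa using X_mem_homogeneousSubmodule R j)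

/-- The map `R[X] → R[X j / X i]` that evaluates a polynomial at the coordinate functions of the
chart `X i ≠ 0`. -/
noncomputable def evalChartCoord : MvPolynomial σ R →+* ChartRing R i :=
  eval₂Hom (chartScalars R i) (chartCoord R i)

variable {R}

lemma val_chartScalars (r : R) :
    (chartScalars R i r).val = algebraMap (MvPolynomial σ R) _ (C r) := by
  have h : (GradedRing.projZeroRingHom' (homogeneousSubmodule σ R) (C r) : MvPolynomial σ R) =
      C r := by
    rw [GradedRing.coe_projZeroRingHom'_apply, GradedRing.projZeroRingHom_apply]
    exact DirectSum.decompose_of_mem_same _ (isHomogeneous_C _ r)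
  rw [← Localization.mk_one_eq_algebraMap, ← h]
  rfl

lemma chartCoord_self : chartCoord R i i = 1 := by
  apply val_injective
  simp [chartCoord, Away.val_mk, Localization.mk_self_mk]

lemma algebraMap_X_mul_val_chartCoord (j : σ) :
    algebraMap (MvPolynomial σ R) _ (X i) * (chartCoord R i j).val =
      algebraMap (MvPolynomial σ R) _ (X j) := by
  rw [chartCoord, Away.val_mk, Localization.mk_eq_mk']
  simp only [pow_one]
  exact IsLocalization.mk'_spec' (M := .powers (X i)) _ (X j) ⟨X i, Submonoid.mem_powers _⟩

lemma evalChartCoord_eq_mk {n : ℕ} {p : MvPolynomial σ R}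
    (hp : p ∈ homogeneousSubmodule σ R (n • 1)) :
    evalChartCoord R i p = Away.mk _ (X_mem_homogeneousSubmodule R i) n p hp := by
  have hpn : p.IsHomogeneous n := by simpa using hp
  have hval : (evalChartCoord R i p).val = p.eval₂ ((algebraMap (MvPolynomial σ R) _).comp C)
      fun j ↦ (chartCoord R i j).val := by
    rw [evalChartCoord, coe_eval₂Hom, ← HomogeneousLocalization.algebraMap_apply, hom_eval₂]
    congr 1
    ext r
    exact val_chartScalars i r
  apply val_injective
  rw [Away.val_mk, Localization.mk_eq_mk', IsLocalization.eq_mk'_iff_mul_eq, hval, mul_comm,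
    map_pow, ← eval₂_mul_of_isHomogeneous hpn]
  simp only [algebraMap_X_mul_val_chartCoord]
  exact (hom_eval₂ p C _ X).symm.trans (by rw [eval₂_eta])

variable (R) in
open Classical in
/-- Dehomogenization with respect to `X i`. The target is the polynomial ring in all the variables,
although `X i` does not occur in the image. -/
noncomputable def dehomogenize : ChartRing R i →+* MvPolynomial σ R :=
  (Localization.awayLift (eval₂Hom C (Function.update X i 1)) (X i) (by simp)).comp
    (algebraMap (ChartRing R i) (Localization.Away (X i)))

open Classical in
lemma dehomogenize_mk {n : ℕ} {p : MvPolynomial σ R}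
    (hp : p ∈ homogeneousSubmodule σ R (n • 1)) :
    dehomogenize R i (Away.mk _ (X_mem_homogeneousSubmodule R i) n p hp) =
      eval₂ C (Function.update X i 1) p := by
  rw [dehomogenize, RingHom.comp_apply, HomogeneousLocalization.algebraMap_apply, Away.val_mk]
  refine (Localization.awayLift_mk _ (X i) p 1 (by simp) n).trans ?_
  rw [one_pow, mul_one, coe_eval₂Hom]

lemma dehomogenize_comp_chartScalars : (dehomogenize R i).comp (chartScalars R i) = C := by
  ext r : 1
  simp [dehomogenize, val_chartScalars, Localization.awayLift, IsLocalization.Away.lift_eq]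

lemma evalChartCoord_comp_dehomogenize :
    (evalChartCoord R i).comp (dehomogenize R i) = RingHom.id _ := by
  classical
  have h : (evalChartCoord R i).comp (eval₂Hom C (Function.update X i 1)) =
      evalChartCoord R i := by
    apply MvPolynomial.ringHom_ext
    · intro r
      simp
    · intro j
      obtain rfl | hj := eq_or_ne j i
      · simp [evalChartCoord, chartCoord_self]
      · simp [hj]
  refine RingHom.ext fun x ↦ ?_
  obtain ⟨n, p, hp, rfl⟩ := Away.mk_surjective _ (X_mem_homogeneousSubmodule R i) x
  rw [RingHom.comp_apply, dehomogenize_mk, ← evalChartCoord_eq_mk]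
  exact congr($h p)

end ChartRing

/-- The chart ring is a retract of a polynomial ring, compatibly with the coefficients. -/
noncomputable def chartScalarsRetract {σ : Type} (R : Type u) [CommRing R] (i : σ) :
    RetractArrow (CommRingCat.ofHom (chartScalars R i))
      (CommRingCat.ofHom (C : R →+* MvPolynomial σ R)) where
  i := Arrow.homMk (𝟙 _) (CommRingCat.ofHom (dehomogenize R i)) (by
    ext : 1
    simp [dehomogenize_comp_chartScalars])
  r := Arrow.homMk (𝟙 _) (CommRingCat.ofHom (evalChartCoord R i)) (by
    ext : 2
    simp [evalChartCoord])
  retract := by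
    ext : 2
    · simp
    · simp [evalChartCoord_comp_dehomogenize]

lemma rlp_affineClosedImmersions_SpecMap_chartScalars {σ : Type} (R : Type u) [CommRing R]
    (i : σ) : affineClosedImmersions.rlp (Spec.map (CommRingCat.ofHom (chartScalars R i))) :=
  rlp_affineClosedImmersions_SpecMap <|
    MorphismProperty.of_retract (chartScalarsRetract R i) (llp_surjective_mvPolynomial_C σ R)

lemma sourceLocalClosure_rlp_toSpecZero_comp_SpecMap {σ : Type} (R : Type u) [CommRing R] :
    sourceLocalClosure IsOpenImmersion affineClosedImmersions.rlp
      (Proj.toSpecZero (homogeneousSubmodule σ R) ≫ Spec.map (CommRingCat.ofHom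
        ((GradedRing.projZeroRingHom' (homogeneousSubmodule σ R)).comp C))) := by
  have hX := X_mem_homogeneousSubmodule (σ := σ) R
  refine sourceLocalClosure.iff_forall_exists.mpr fun x ↦ ?_
  obtain ⟨i, hi⟩ := Opens.mem_iSup.mp <|
    (Proj.iSup_basicOpen_eq_top' _ X (fun i ↦ ⟨1, hX i⟩)
      (adjoin_homogeneousSubmodule_zero_range_X σ R)).ge (Set.mem_univ x)
  refine ⟨Proj.basicOpen _ (X i), hi, ?_⟩
  rw [← affineClosedImmersions.rlp.cancel_left_of_respectsIso
    (Proj.basicOpenIsoSpec _ _ (hX i) one_pos).inv]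
  convert rlp_affineClosedImmersions_SpecMap_chartScalars R i using 1
  exact (Proj.awayι_toSpecZero_assoc _ _ _ _ _).trans (Spec.map_comp _ _).symm

lemma sourceLocalClosure_rlp_structMap (k : Type u) [Field k] (N : ℕ) :
    sourceLocalClosure IsOpenImmersion affineClosedImmersions.rlp (structMap k N) :=
  sourceLocalClosure_rlp_toSpecZero_comp_SpecMap k

end ProjSpace

lemma exists_isAffineOpen_isClosedImmersion_morphismRestrict {T Z : Scheme.{u}} (i : T ⟶ Z)
    [IsImmersion i] {x : T} {O : T.Opens} (hx : x ∈ O) :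
    ∃ S : Z.Opens, IsAffineOpen S ∧ i x ∈ S ∧ i ⁻¹ᵁ S ≤ O ∧ IsClosedImmersion (i ∣_ S) := by
  obtain ⟨V, hV, hVO⟩ := i.isEmbedding.isInducing.isOpen_iff.mp O.2
  have hxV : i x ∈ V := hVO.ge hx
  obtain ⟨S, hS, hxS, hSV⟩ := exists_isAffineOpen_mem_and_subset
    (U := ⟨V, hV⟩ ⊓ i.coborderRange) ⟨hxV, subset_coborder (Set.mem_range_self x)⟩
  refine ⟨S, hS, hxS, fun y hy ↦ hVO.le (hSV hy).1, .of_isPreimmersion _ ?_⟩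
  have hrange : Set.range (i ∣_ S) = Subtype.val ⁻¹' Set.range i := by
    rw [morphismRestrict_base]
    exact Set.range_restrictPreimage _ _
  rw [hrange]
  exact isClosed_preimage_val_coborder.preimage
    (continuous_inclusion fun y hy ↦ (hSV hy).2)

lemma exists_extension_of_isImmersion {B P T Z : Scheme.{u}} {p : P ⟶ B}
    (hp : sourceLocalClosure IsOpenImmersion affineClosedImmersions.rlp p)
    {i : T ⟶ Z} [IsImmersion i] {s : Z ⟶ B} {m : T ⟶ P} (sq : m ≫ p = i ≫ s) (x : T) :
    ∃ S : Z.Opens, i x ∈ S ∧ ∃ d : (S : Scheme.{u}) ⟶ P,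
      i ∣_ S ≫ d = (i ⁻¹ᵁ S).ι ≫ m ∧ d ≫ p = S.ι ≫ s := by
  obtain ⟨U, hxU, hU⟩ := sourceLocalClosure.iff_forall_exists.mp hp (m x)
  obtain ⟨S, hS, hxS, hSU, hi⟩ :=
    exists_isAffineOpen_isClosedImmersion_morphismRestrict i (O := m ⁻¹ᵁ U) hxU
  let c : (i ⁻¹ᵁ S : Scheme.{u}) ⟶ U := T.homOfLE hSU ≫ m ∣_ U
  have hc : c ≫ U.ι = (i ⁻¹ᵁ S).ι ≫ m := by simp [c]
  have hsq : CommSq c (i ∣_ S) (U.ι ≫ p) (S.ι ≫ s) := ⟨by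
    rw [reassoc_of% hc, sq, morphismRestrict_ι_assoc]⟩
  have := hU (i ∣_ S) ⟨hS, hi⟩
  refine ⟨S, hxS, hsq.lift ≫ U.ι, ?_, ?_⟩
  · rw [hsq.fac_left_assoc, hc]
  · rw [Category.assoc, hsq.fac_right]

lemma exists_section_of_span {B Y Z T W : Scheme.{u}} [IrreducibleSpace Y] [IrreducibleSpace Z]
    [Nonempty T] {sY : Y ⟶ B} {sZ : Z ⟶ B} {f : Y.PartialMap Z} (t : T ⟶ f.domain)
    [IsOpenImmersion t] (w : W ⟶ Z) [IsOpenImmersion w] (γ : W ⟶ Y) (hγ : γ ≫ sY = w ≫ sZ)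
    (l : T ⟶ W) (hlw : l ≫ w = t ≫ f.hom) (hlγ : l ≫ γ = t ≫ f.domain.ι) :
    ∃ g : Z.PartialMap Y, g.IsOverStruct sZ sY ∧ f.CompEqId g := by
  have : Nonempty W := .map l ‹_›
  let u := t ≫ f.domain.ι
  have hu : u.opensRange ≤ f.domain := by
    rintro _ ⟨x, rfl⟩
    exact (t x).2
  have hut : u.isoOpensRange.inv ≫ t = Y.homOfLE hu := by
    simp [← cancel_mono f.domain.ι, u]
  refine ⟨⟨w.opensRange, w.opensRange.2.dense (Set.range_nonempty _), w.isoOpensRange.inv ≫ γ⟩,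
    by simp [Scheme.PartialMap.IsOverStruct, hγ], u.opensRange,
    u.opensRange.2.dense (Set.range_nonempty _), hu,
    u.isoOpensRange.inv ≫ l ≫ w.isoOpensRange.hom, ?_, ?_⟩
  · simp [hlw, reassoc_of% hut]
  · simp [hlγ, u]

theorem section_of_genericallyInjective_to_variety_general {B P Y Z : Scheme.{u}}
    [IrreducibleSpace Y] [IrreducibleSpace Z] {p : P ⟶ B} {sY : Y ⟶ B} {sZ : Z ⟶ B}
    (hp : sourceLocalClosure IsOpenImmersion affineClosedImmersions.rlp p)
    {a : Y.PartialMap P} {b : P.PartialMap Y} (hb : b.IsOverStruct p sY) (hab : a.CompEqId b)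
    {f : Y.PartialMap Z} (hf : f.IsOverStruct sY sZ) (hinj : f.GenericallyInjective) :
    ∃ g : Z.PartialMap Y, g.IsOverStruct sZ sY ∧ f.CompEqId g := by
  obtain ⟨U₁, hU₁, -, r, -, hr⟩ := hab
  obtain ⟨U, hU, hUf, V, -, h, hh, _⟩ := hinj
  obtain ⟨y, hyU, hyU₁⟩ := hU₁.inter_open_nonempty U U.2 hU.nonempty
  let O := U ⊓ U₁
  let e : (O : Scheme.{u}) ⟶ f.domain := Y.homOfLE (inf_le_left.trans hUf)
  let i := e ≫ f.hom
  let m : (O : Scheme.{u}) ⟶ b.domain := Y.homOfLE inf_le_right ≫ r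
  have hm : m ≫ b.hom = e ≫ f.domain.ι := by simp [m, e, hr]
  have hi : i = Y.homOfLE inf_le_left ≫ h ≫ V.ι := by simp [i, e, hh]
  have : IsImmersion i := hi ▸ inferInstance
  have sq : (m ≫ b.domain.ι) ≫ p = i ≫ sZ := by
    rw [Category.assoc, ← hb, reassoc_of% hm, ← hf, Category.assoc]
  obtain ⟨S, hyS, d, hid, hd⟩ := exists_extension_of_isImmersion hp sq ⟨y, hyU, hyU₁⟩
  have hpb := isPullback_morphismRestrict d b.domain
  have hl : ((i ⁻¹ᵁ S).ι ≫ m) ≫ b.domain.ι = i ∣_ S ≫ d := by rw [hid, Category.assoc]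
  have : Nonempty (i ⁻¹ᵁ S : Scheme.{u}) := ⟨⟨_, hyS⟩⟩
  refine exists_section_of_span ((i ⁻¹ᵁ S).ι ≫ e) ((d ⁻¹ᵁ b.domain).ι ≫ S.ι)
    (d ∣_ b.domain ≫ b.hom) ?_ (hpb.lift _ _ hl) ?_ ?_
  · rw [Category.assoc, hb, morphismRestrict_ι_assoc, hd, Category.assoc]
  · rw [hpb.lift_snd_assoc, morphismRestrict_ι, Category.assoc]
  · rw [hpb.lift_fst_assoc, Category.assoc, hm, Category.assoc]

/-- **Remark after Lemma 1.**  Let `k` be a field, `Y` a retract rational `k`-variety and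
`Z` any `k`-variety.  Then any generically injective rational map `f : Y ⇢ Z` admits a
rational section, i.e. a rational map `g : Z ⇢ Y` over `k` such that `g ∘ f` is defined
and coincides with the identity as a rational map. -/
theorem section_of_genericallyInjective_to_variety
    (k : Type u) [Field k] (Y : Scheme.{u}) (sY : Y ⟶ Spec (CommRingCat.of k))
    [IsIntegral Y] [LocallyOfFiniteType sY] [QuasiCompact sY] [IsSeparated sY]
    (Z : Scheme.{u}) (sZ : Z ⟶ Spec (CommRingCat.of k))
    [IsIntegral Z] [LocallyOfFiniteType sZ] [QuasiCompact sZ] [IsSeparated sZ]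
    (hY : IsRetractRational k Y sY)
    (f : Y.PartialMap Z) (hf : f.IsOverStruct sY sZ)
    (hinj : f.GenericallyInjective) :
    ∃ g : Z.PartialMap Y, g.IsOverStruct sZ sY ∧ f.CompEqId g := by
  obtain ⟨N, -, a, b, -, hb, hab⟩ := hY
  exact section_of_genericallyInjective_to_variety_general
    (ProjSpace.sourceLocalClosure_rlp_structMap k N) hb hab hf hinj
end

section
/- Let k be a field. Every retract rational k-variety is geometrically integral. -/
open AlgebraicGeometry CategoryTheory CategoryTheory.Limits TopologicalSpace

universe u

attribute [local instance] MvPolynomial.gradedAlgebra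

/-!
If `g ∘ f = id` as rational maps, then `g : ℙ^N ⇢ X` is dominant. The projection
`{X₀ ≠ 0} ⊆ 𝔸^(N+1) ⟶ ℙ^N` of the affine cone is dominant as well, so `X` is dominated over `k` by
a nonempty open subscheme of affine space, which is geometrically integral. Geometric integrality
passes to `X`: flat base change preserves scheme-theoretic dominance of a quasi-compact dominant
morphism to a reduced scheme, so `X_K` inherits reducedness and irreducibility for every field
extension `K` of `k`.
-/

lemma irreducibleSpace_of_denseRange {X Y : Type*} [TopologicalSpace X] [TopologicalSpace Y]
    [IrreducibleSpace X] {f : X → Y} (hf : DenseRange f) (hc : Continuous f) :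
    IrreducibleSpace Y := by
  rw [irreducibleSpace_def, Set.top_eq_univ, ← hf.closure_range, ← Set.image_univ]
  exact ((IrreducibleSpace.isIrreducible_univ X).image f hc.continuousOn).closure

instance isClosedUnderIsomorphisms_isIntegral :
    ObjectProperty.IsClosedUnderIsomorphisms (C := Scheme.{u}) (IsIntegral ·) where
  of_iso {X _} e _ := have : IsIntegral X := ‹_›; .of_isIso e.hom

section

variable {X Y S : Scheme.{u}}

lemma isIntegral_pullback_of_isDominant {T : Scheme.{u}} (g : Y ⟶ X) (s : X ⟶ S) (t : T ⟶ S)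
    [IsDominant g] [QuasiCompact g] [IsReduced X] [Flat t] [IsIntegral (pullback (g ≫ s) t)] :
    IsIntegral (pullback s t) := by
  have : IsSchemeTheoreticallyDominant g := .of_isDominant g
  have : IsIntegral (pullback g (pullback.fst s t)) :=
    .of_isIso (pullbackRightPullbackFstIso s t g).inv
  let p := pullback.snd g (pullback.fst s t)
  have : IsReduced (pullback s t) := IsSchemeTheoreticallyDominant.isReduced p
  have : IrreducibleSpace ↥(pullback s t) :=
    irreducibleSpace_of_denseRange p.denseRange p.continuous
  exact isIntegral_of_irreducibleSpace_of_isReduced _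

lemma geometricallyIntegral_of_comp_of_isDominant [IsIntegral S] [Subsingleton S]
    (g : Y ⟶ X) (s : X ⟶ S) [IsDominant g] [QuasiCompact g] [IsReduced X]
    [GeometricallyIntegral (g ≫ s)] : GeometricallyIntegral s := by
  refine ⟨geometrically_iff_of_isClosedUnderIsomorphisms.mpr fun K _ t ↦ ?_⟩
  have : IsIntegral (pullback (g ≫ s) t) :=
    pullback_of_geometrically GeometricallyIntegral.geometrically_isIntegral K t
  exact isIntegral_pullback_of_isDominant g s t

lemma geometricallyIntegral_comp_of_isOpenImmersion (j : Y ⟶ X) (s : X ⟶ S)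
    [IsOpenImmersion j] [GeometricallyIntegral s] [Surjective (j ≫ s)] :
    GeometricallyIntegral (j ≫ s) := by
  refine ⟨geometrically_iff_of_isClosedUnderIsomorphisms.mpr fun K _ t ↦ ?_⟩
  have : Nonempty ↥(pullback (j ≫ s) t) := (pullback.snd (j ≫ s) t).surjective.nonempty
  have : IsIntegral (pullback s t) :=
    pullback_of_geometrically GeometricallyIntegral.geometrically_isIntegral K t
  exact isIntegral_of_isOpenImmersion
    ((pullbackRightPullbackFstIso s t j).inv ≫ pullback.snd j (pullback.fst s t))

lemma isDominant_hom_of_compEqId {f : X.PartialMap Y} {g : Y.PartialMap X}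
    (h : f.CompEqId g) : IsDominant g.hom := by
  obtain ⟨U, hU, -, l, -, hl⟩ := h
  have : IsDominant (l ≫ g.hom) := hl ▸ Opens.isDominant_ι hU
  exact .of_comp l g.hom

lemma geometricallyIntegral_of_isDominant_partialMap [IsIntegral S] [Subsingleton S]
    {P : Scheme.{u}} {sP : P ⟶ S} {sX : X ⟶ S} [IsReduced X] [NoetherianSpace Y]
    (p : Y ⟶ P) [IsDominant p] [GeometricallyIntegral (p ≫ sP)]
    (g : P.PartialMap X) [IsDominant g.hom] (hg : g.IsOverStruct sP sX) :
    GeometricallyIntegral sX := by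
  let V := p ⁻¹ᵁ g.domain
  have : Nonempty V := by
    have : Nonempty P := (p ≫ sP).surjective.nonempty.map p
    obtain ⟨y, hy⟩ := p.denseRange.exists_mem_open g.domain.isOpen g.dense_domain.nonempty
    exact ⟨y, hy⟩
  have : IsDominant (p ∣_ g.domain) := IsZariskiLocalAtTarget.restrict ‹_› _
  have : NoetherianSpace V := V.ι.isOpenEmbedding.isInducing.noetherianSpace
  have hV : (p ∣_ g.domain ≫ g.hom) ≫ sX = V.ι ≫ p ≫ sP := by
    rw [Category.assoc, show g.hom ≫ sX = _ from hg, morphismRestrict_ι_assoc]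
  have : GeometricallyIntegral ((p ∣_ g.domain ≫ g.hom) ≫ sX) :=
    hV ▸ geometricallyIntegral_comp_of_isOpenImmersion _ _
  exact geometricallyIntegral_of_comp_of_isDominant (p ∣_ g.domain ≫ g.hom) sX

end

lemma geometricallyIntegral_specMap_C (σ : Type) (R : Type u) [CommRing R] :
    GeometricallyIntegral
      (Spec.map (CommRingCat.ofHom (MvPolynomial.C : R →+* MvPolynomial σ R))) := by
  have : MorphismProperty.RespectsIso @GeometricallyIntegral.{u} :=
    MorphismProperty.IsStableUnderBaseChange.respectsIso
  let e : CommRingCat.of (MvPolynomial (ULift.{u} σ) R) ≅ CommRingCat.of (MvPolynomial σ R) :=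
    (MvPolynomial.renameEquiv R Equiv.ulift).toRingEquiv.toCommRingCatIso
  have he : CommRingCat.ofHom (MvPolynomial.C : R →+* MvPolynomial σ R) =
      CommRingCat.ofHom MvPolynomial.C ≫ e.hom := by
    ext; simp [e]
  rw [he, Spec.map_comp, MorphismProperty.cancel_left_of_respectsIso @GeometricallyIntegral,
    ← AffineSpace.SpecIso_inv_over (.of R),
    MorphismProperty.cancel_left_of_respectsIso @GeometricallyIntegral]
  infer_instance

section

variable {σ : Type*} {A : Type u} [CommRing A] [SetLike σ A]
  [AddSubgroupClass σ A] (𝒜 : ℕ → σ) [GradedRing 𝒜]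

lemma exists_homogeneous_basicOpen_le {x : Proj 𝒜} {U : (Proj 𝒜).Opens} (hx : x ∈ U) :
    ∃ (n : ℕ) (r : A), 0 < n ∧ r ∈ 𝒜 n ∧ x ∈ Proj.basicOpen 𝒜 r ∧ Proj.basicOpen 𝒜 r ≤ U := by
  obtain ⟨_, ⟨a, rfl⟩, hxa, haU⟩ := Opens.isBasis_iff_nbhd.mp (Proj.isBasis_basicOpen 𝒜) hx
  rw [Proj.basicOpen_eq_iSup_proj, Opens.mem_iSup] at hxa
  rw [Proj.basicOpen_eq_iSup_proj, iSup_le_iff] at haU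
  obtain ⟨i, hxi⟩ := hxa
  obtain ⟨m, hm, s, hs, hxs⟩ : ∃ m, 0 < m ∧ ∃ s ∈ 𝒜 m, s ∉ x.asHomogeneousIdeal := by
    by_contra! H
    exact x.not_irrelevant_le ((HomogeneousIdeal.toIdeal_irrelevant_le 𝒜).mpr H)
  refine ⟨m + i, s * GradedRing.proj 𝒜 i a, by positivity,
    SetLike.mul_mem_graded hs (SetLike.coe_mem _), ?_⟩
  rw [Proj.basicOpen_mul]
  exact ⟨⟨hxs, hxi⟩, inf_le_right.trans (haU i)⟩

lemma isDominant_fromOfGlobalSections {X : Scheme.{u}} [IsReduced X]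
    (φ : A →+* Γ(X, ⊤)) (hφ : (HomogeneousIdeal.irrelevant 𝒜).toIdeal.map φ = ⊤)
    (hinj : Function.Injective φ) : IsDominant (Proj.fromOfGlobalSections 𝒜 φ hφ) := by
  refine ⟨dense_iff_inter_open.mpr ?_⟩
  rintro U hU ⟨x, hx⟩
  obtain ⟨n, r, hn, hr, hxr, hrU⟩ := exists_homogeneous_basicOpen_le 𝒜 (U := ⟨U, hU⟩) hx
  have hr0 : r ≠ 0 := by
    rintro rfl
    simp at hxr
  have hne : X.basicOpen (φ r) ≠ ⊥ := by
    simpa [basicOpen_eq_bot_iff, map_eq_zero_iff φ hinj]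
  rw [← Proj.fromOfGlobalSections_preimage_basicOpen 𝒜 φ hφ hn hr] at hne
  obtain ⟨y, hy⟩ := (Opens.ne_bot_iff_nonempty _).mp hne
  exact ⟨_, hrU hy, y, rfl⟩

/-- The morphism `Spec B ⟶ Proj 𝒜` given by a ring homomorphism `φ : A → B` that inverts some
homogeneous element `r` of positive degree. For `B = A[1/r]` it is the projection of the affine cone
over `Proj 𝒜`, restricted to `r ≠ 0`; it does not depend on the choice of `r`, which only ensures
that `Spec B` avoids the vertex. -/
noncomputable def toProjOfIsUnit {B : Type u} [CommRing B] (φ : A →+* B) {n : ℕ} (hn : 0 < n)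
    {r : A} (hr : r ∈ 𝒜 n) (hφr : IsUnit (φ r)) : Spec (CommRingCat.of B) ⟶ Proj 𝒜 :=
  Proj.fromOfGlobalSections 𝒜 ((Scheme.ΓSpecIso (.of B)).inv.hom.comp φ) <|
    Ideal.eq_top_of_isUnit_mem _
      (Ideal.mem_map_of_mem _ (HomogeneousIdeal.mem_irrelevant_of_mem 𝒜 hn hr))
      (hφr.map (Scheme.ΓSpecIso (.of B)).inv.hom)

variable {𝒜} {B : Type u} [CommRing B] (φ : A →+* B) {n : ℕ} (hn : 0 < n)
  {r : A} (hr : r ∈ 𝒜 n) (hφr : IsUnit (φ r))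

lemma isDominant_toProjOfIsUnit [_root_.IsReduced B] (hφ : Function.Injective φ) :
    IsDominant (toProjOfIsUnit 𝒜 φ hn hr hφr) :=
  isDominant_fromOfGlobalSections 𝒜 _ _ <|
    (ConcreteCategory.bijective_of_isIso (Scheme.ΓSpecIso (.of B)).inv).injective.comp hφ

lemma toProjOfIsUnit_toSpecZero : toProjOfIsUnit 𝒜 φ hn hr hφr ≫ Proj.toSpecZero 𝒜 =
    Spec.map (CommRingCat.ofHom (φ.comp (algebraMap (𝒜 0) A))) := by
  rw [toProjOfIsUnit, Proj.fromOfGlobalSections_toSpecZero, RingHom.comp_assoc,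
    CommRingCat.ofHom_comp, CommRingCat.ofHom_hom, Spec.map_comp,
    toSpecΓ_SpecMap_ΓSpecIso_inv_assoc]

end

lemma toProjOfIsUnit_structMap {k : Type u} [Field k] {N : ℕ} {B : Type u} [CommRing B]
    (φ : MvPolynomial (Fin (N + 1)) k →+* B) {n : ℕ} (hn : 0 < n)
    {r : MvPolynomial (Fin (N + 1)) k}
    (hr : r ∈ MvPolynomial.homogeneousSubmodule (Fin (N + 1)) k n) (hφr : IsUnit (φ r)) :
    toProjOfIsUnit _ φ hn hr hφr ≫ ProjSpace.structMap k N =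
      Spec.map (CommRingCat.ofHom φ) ≫ Spec.map (CommRingCat.ofHom MvPolynomial.C) := by
  refine (reassoc_of% toProjOfIsUnit_toSpecZero φ hn hr hφr) _ |>.trans ?_
  rw [← Spec.map_comp, ← Spec.map_comp, ← CommRingCat.ofHom_comp, ← CommRingCat.ofHom_comp]
  refine congrArg (fun ψ ↦ Spec.map (CommRingCat.ofHom ψ)) (RingHom.ext fun c ↦ congrArg φ ?_)
  exact DirectSum.decompose_of_mem_same (MvPolynomial.homogeneousSubmodule (Fin (N + 1)) k)
    (MvPolynomial.isHomogeneous_C _ c)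

theorem isIntegral_baseChange_of_isRetractRational_general
    {k : Type u} [Field k] {X : Scheme.{u}} [IsReduced X] {sX : X ⟶ Spec (CommRingCat.of k)}
    (hX : IsRetractRational k X sX) : GeometricallyIntegral sX := by
  obtain ⟨N, -, f, g, -, hg, hfg⟩ := hX
  let x : MvPolynomial (Fin (N + 1)) k := .X 0
  let φ := algebraMap (MvPolynomial (Fin (N + 1)) k) (Localization.Away x)
  have hx : x ∈ MvPolynomial.homogeneousSubmodule _ k 1 := MvPolynomial.isHomogeneous_X k 0
  let p : Spec _ ⟶ ProjSpace k N :=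
    toProjOfIsUnit _ φ one_pos hx (IsLocalization.Away.algebraMap_isUnit x)
  have hpow : Submonoid.powers x ≤ nonZeroDivisors _ :=
    powers_le_nonZeroDivisors_of_noZeroDivisors (MvPolynomial.X_ne_zero 0)
  have : IsDomain (Localization.Away x) := IsLocalization.isDomain_localization hpow
  have : IsDominant p :=
    isDominant_toProjOfIsUnit φ one_pos hx _ (IsLocalization.injective _ hpow)
  have : IsDominant g.hom := isDominant_hom_of_compEqId hfg
  have := geometricallyIntegral_specMap_C (Fin (N + 1)) k
  have hp : p ≫ ProjSpace.structMap k N = _ := toProjOfIsUnit_structMap φ one_pos hx _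
  have : GeometricallyIntegral (p ≫ ProjSpace.structMap k N) := by
    rw [hp]
    exact geometricallyIntegral_comp_of_isOpenImmersion _ _
  exact geometricallyIntegral_of_isDominant_partialMap p g hg

/-- Every retract rational `k`-variety is geometrically integral:  its base change to an
algebraic closure of `k` is an integral scheme. -/
theorem isIntegral_baseChange_of_isRetractRational
    (k : Type u) [Field k] (X : Scheme.{u}) (sX : X ⟶ Spec (CommRingCat.of k))
    [IsIntegral X] [LocallyOfFiniteType sX] [QuasiCompact sX] [IsSeparated sX]
    (hX : IsRetractRational k X sX) :
    IsIntegral (baseChange (AlgebraicClosure k) sX) := by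
  have := isIntegral_baseChange_of_isRetractRational_general hX
  exact pullback_of_geometrically GeometricallyIntegral.geometrically_isIntegral _ _
end
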